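/- arXiv:2209.07847 — 2 statements merged into one kernel-verified Lean document; each statement's English description precedes it below -/
import Mathlib

section
/- Let G be a finite simple graph on [n] and let 2 ≤ k ≤ ν(G). If G contains a dominating clique K_{2k−1} (a complete subgraph on 2k − 1 vertices whose vertex set is a dominating set), then g_{I(G)}(k) = 0, i.e. depth(S/I(G)^{[k]}) = 2k − 1. -/
open MvPolynomial

section Preamble

variable (K : Type*) [Field K] {σ : Type*} [Fintype σ] [DecidableEq σ]

/-- A (monic) monomial of the polynomial ring. -/
def IsMonomial (f : MvPolynomial σ K) : Prop :=
  ∃ d : σ →₀ ℕ, f = monomial d 1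

/-- An ideal generated by monomials. -/
def IsMonomialIdeal (I : Ideal (MvPolynomial σ K)) : Prop :=
  ∃ A : Set (MvPolynomial σ K), (∀ u ∈ A, IsMonomial K u) ∧ I = Ideal.span A

/-- The unique minimal set of monomial generators `G(I)` of a monomial ideal:
the monomials of `I` that are minimal with respect to divisibility. -/
def minGens (I : Ideal (MvPolynomial σ K)) : Set (MvPolynomial σ K) :=
  {u | IsMonomial K u ∧ u ∈ I ∧ ∀ v, IsMonomial K v → v ∈ I → v ∣ u → v = u}

/-- A squarefree monomial ideal. -/
def IsSqfreeMonomialIdeal (I : Ideal (MvPolynomial σ K)) : Prop :=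
  IsMonomialIdeal K I ∧ ∀ u ∈ minGens K I, Squarefree u

/-- The `k`-th squarefree power `I^{[k]}`: the ideal generated by the squarefree
products of `k` minimal monomial generators of `I`. -/
noncomputable def sqPow (I : Ideal (MvPolynomial σ K)) (k : ℕ) : Ideal (MvPolynomial σ K) :=
  Ideal.span {u | Squarefree u ∧ ∃ l : List (MvPolynomial σ K),
    l.length = k ∧ (∀ f ∈ l, f ∈ minGens K I) ∧ u = l.prod}

/-- `ν(I)`: the maximum length of a regular sequence of monomials in `I`. -/
noncomputable def monNu (I : Ideal (MvPolynomial σ K)) : ℕ :=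
  sSup {m | ∃ l : List (MvPolynomial σ K), l.length = m ∧
    (∀ f ∈ l, IsMonomial K f ∧ f ∈ I) ∧
    RingTheory.Sequence.IsRegular (MvPolynomial σ K) l}

/-- The minimal degree `d` of a minimal monomial generator of `I`
(so `d_k = minDeg (I^{[k]})`). -/
noncomputable def minDeg (I : Ideal (MvPolynomial σ K)) : ℕ :=
  sInf (totalDegree '' minGens K I)

/-- `depth(S/I)`: the maximum length of an `S/I`-regular sequence of elements of
the graded maximal ideal `(x_1, …, x_n)`. -/
noncomputable def qdepth (I : Ideal (MvPolynomial σ K)) : ℕ :=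
  sSup {m | ∃ l : List (MvPolynomial σ K), l.length = m ∧
    (∀ f ∈ l, f ∈ Ideal.span (Set.range (X : σ → MvPolynomial σ K))) ∧
    RingTheory.Sequence.IsRegular (MvPolynomial σ K ⧸ I) l}

/-- `I` has linear quotients with respect to the ordering `L` of its minimal
monomial generators: each successive colon ideal is generated by variables. -/
def HasLinearQuotientsOrder (I : Ideal (MvPolynomial σ K))
    (L : List (MvPolynomial σ K)) : Prop :=
  L.Nodup ∧ (∀ u, u ∈ L ↔ u ∈ minGens K I) ∧
  ∀ i : Fin L.length, 0 < (i : ℕ) →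
    ∃ A : Set σ,
      Submodule.colon (Ideal.span {u | u ∈ L.take (i : ℕ)}) (Ideal.span {L.get i})
        = Ideal.span (X '' A)

/-- A monomial ideal with linear quotients. -/
def HasLinearQuotients (I : Ideal (MvPolynomial σ K)) : Prop :=
  ∃ L, HasLinearQuotientsOrder K I L

/-- A polymatroidal ideal: a monomial ideal generated in a single degree whose
minimal generators satisfy the exchange property. -/
def IsPolymatroidal (I : Ideal (MvPolynomial σ K)) : Prop :=
  IsMonomialIdeal K I ∧
  (∃ d, ∀ u ∈ minGens K I, totalDegree u = d) ∧
  ∀ u ∈ minGens K I, ∀ v ∈ minGens K I, ∀ k : σ,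
    degreeOf k v < degreeOf k u →
    ∃ l : σ, degreeOf l u < degreeOf l v ∧
      ∃ w, u = X k * w ∧ X l * w ∈ minGens K I

/-- A matroidal ideal: a polymatroidal ideal all of whose minimal generators are
squarefree. -/
def IsMatroidal (I : Ideal (MvPolynomial σ K)) : Prop :=
  IsPolymatroidal K I ∧ ∀ u ∈ minGens K I, Squarefree u

/-- The squarefree part of a monomial ideal: the ideal generated by its squarefree
minimal generators. -/
noncomputable def sqfPart (I : Ideal (MvPolynomial σ K)) : Ideal (MvPolynomial σ K) :=
  Ideal.span {u | u ∈ minGens K I ∧ Squarefree u}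

/-- The squarefree Veronese ideal `𝔪^{[d]}`, generated by all squarefree
monomials of degree `d`. -/
noncomputable def veronese (d : ℕ) : Ideal (MvPolynomial σ K) :=
  Ideal.span {u | ∃ F : Finset σ, F.card = d ∧ u = ∏ i ∈ F, X i}

/-- A chordal graph: no induced cycle of length greater than 3. -/
def IsChordal {V : Type*} (G : SimpleGraph V) : Prop :=
  ∀ m : ℕ, 4 ≤ m → ¬ ∃ f : ZMod m → V, Function.Injective f ∧
    ∀ i j : ZMod m, G.Adj (f i) (f j) ↔ (i = j + 1 ∨ j = i + 1)

/-- A matching of `G`: a finite set of pairwise vertex-disjoint edges of `G`. -/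
def IsMatching (G : SimpleGraph σ) (M : Finset (Sym2 σ)) : Prop :=
  (↑M ⊆ G.edgeSet) ∧ (M : Set (Sym2 σ)).Pairwise fun e f => ∀ v, v ∈ e → v ∉ f

/-- A `k`-matching of `G`. -/
def IsKMatching (G : SimpleGraph σ) (M : Finset (Sym2 σ)) (k : ℕ) : Prop :=
  IsMatching G M ∧ M.card = k

/-- The vertex set `V(M)` of a matching. -/
def mVerts (M : Finset (Sym2 σ)) : Finset σ :=
  Finset.univ.filter fun v => ∃ e ∈ M, v ∈ e

/-- The squarefree monomial `∏_{v ∈ V(M)} x_v` attached to a matching. -/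
noncomputable def matchMon (M : Finset (Sym2 σ)) : MvPolynomial σ K :=
  ∏ v ∈ mVerts M, X v

/-- The edge ideal `I(G)` of a finite simple graph `G`. -/
noncomputable def edgeIdeal (G : SimpleGraph σ) : Ideal (MvPolynomial σ K) :=
  Ideal.span {u | ∃ i j, G.Adj i j ∧ u = X i * X j}

/-- The `k`-th squarefree power `I(G)^{[k]}` of the edge ideal, generated by the
monomials `∏_{v ∈ V(M)} x_v` of the `k`-matchings `M` of `G`. -/
noncomputable def matchPow (G : SimpleGraph σ) (k : ℕ) : Ideal (MvPolynomial σ K) :=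
  Ideal.span {u | ∃ M : Finset (Sym2 σ), IsKMatching G M k ∧ u = matchMon K M}

/-- The matching number `ν(G)`. -/
noncomputable def matchNum (G : SimpleGraph σ) : ℕ :=
  sSup {k | ∃ M : Finset (Sym2 σ), IsKMatching G M k}

end Preamble

open RingTheory.Sequence
open scoped Pointwise

universe u v

/-!
The ideal `I(G)^{[k]}` is the Stanley–Reisner ideal of the complex `Δ` of vertex sets containing no
`k`-matching. Every set of at most `2k - 1` vertices is a face of `Δ`, and removing the vertices one
at a time (the short exact sequence of star and deletion, together with Rees' characterization of
grade by `Ext`) shows that a complex containing all sets of at most `r` vertices has depth at least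
`r`. Conversely, a dominating clique `C` on `2k - 1` vertices is a facet: any further vertex is
matched into `C`, and the rest of `C` is matched perfectly. A facet `C` is the support of an
associated prime of dimension `|C|`, and the length of a regular sequence is at most the dimension
of any associated prime.
-/

section Depth

variable {R : Type u} [CommRing R]

/-- `HasRegularSequence 𝔞 M r` says that the grade of `𝔞` on `M` is at least `r`, in terms of
regular sequences. -/
def HasRegularSequence (𝔞 : Ideal R) (M : Type v) [AddCommGroup M] [Module R M] (r : ℕ) : Prop :=
  ∃ l : List R, l.length = r ∧ (∀ f ∈ l, f ∈ 𝔞) ∧ IsRegular M l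

namespace HasRegularSequence

variable {𝔞 : Ideal R} {r : ℕ}

lemma zero (𝔞 : Ideal R) (M : Type v) [AddCommGroup M] [Module R M] [Nontrivial M] :
    HasRegularSequence 𝔞 M 0 :=
  ⟨[], rfl, by simp, IsRegular.nil R M⟩

lemma succ {M : Type v} [AddCommGroup M] [Module R M] {x : R} (hx𝔞 : x ∈ 𝔞)
    (hx : IsSMulRegular M x) (h : HasRegularSequence 𝔞 (QuotSMulTop x M) r) :
    HasRegularSequence 𝔞 M (r + 1) := by
  obtain ⟨l, hl, hl𝔞, hreg⟩ := h
  exact ⟨x :: l, by simp [hl], by simpa using ⟨hx𝔞, hl𝔞⟩, (isRegular_cons_iff M x l).2 ⟨hx, hreg⟩⟩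

lemma congr {M N : Type v} [AddCommGroup M] [Module R M] [AddCommGroup N] [Module R N]
    (e : M ≃ₗ[R] N) : HasRegularSequence 𝔞 M r ↔ HasRegularSequence 𝔞 N r := by
  simp only [HasRegularSequence, e.isRegular_congr]

open CategoryTheory Abelian in
/-- By Rees' theorem the grade is read off from the vanishing of `Ext (R ⧸ 𝔞) M`, which passes
from the ends of a short exact sequence to its middle term. -/
lemma of_exact [Small.{v} R] [IsNoetherianRing R] {M₁ M₂ M₃ : Type v}
    [AddCommGroup M₁] [Module R M₁] [Module.Finite R M₁]
    [AddCommGroup M₂] [Module R M₂] [Module.Finite R M₂]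
    [AddCommGroup M₃] [Module R M₃] [Module.Finite R M₃]
    {f : M₁ →ₗ[R] M₂} {g : M₂ →ₗ[R] M₃} (hf : Function.Injective f) (hfg : Function.Exact f g)
    (hg : Function.Surjective g) (h𝔞₁ : 𝔞 • (⊤ : Submodule R M₁) < ⊤)
    (h𝔞₃ : 𝔞 • (⊤ : Submodule R M₃) < ⊤)
    (h₁ : HasRegularSequence 𝔞 M₁ r) (h₃ : HasRegularSequence 𝔞 M₃ r) :
    HasRegularSequence 𝔞 M₂ r := by
  have h𝔞₂ : 𝔞 • (⊤ : Submodule R M₂) < ⊤ := by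
    refine lt_top_iff_ne_top.2 fun htop ↦ h𝔞₃.ne ?_
    have := congrArg (Submodule.map g) htop
    rwa [Submodule.map_smul'', Submodule.map_top, LinearMap.range_eq_top.2 hg] at this
  let S := ModuleCat.shortComplexOfCompEqZero f g hfg.linearMap_comp_eq_zero
  have hS : S.ShortExact :=
    { exact := ModuleCat.shortComplex_exact _ hfg
      mono_f := (ModuleCat.mono_iff_injective _).2 hf
      epi_g := (ModuleCat.epi_iff_surjective _).2 hg }
  have hExt₁ := ((ModuleCat.exists_isRegular_tfae 𝔞 r (.of R M₁) h𝔞₁).out 3 1).1 h₁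
  have hExt₃ := ((ModuleCat.exists_isRegular_tfae 𝔞 r (.of R M₃) h𝔞₃).out 3 1).1 h₃
  refine ((ModuleCat.exists_isRegular_tfae 𝔞 r (.of R M₂) h𝔞₂).out 3 1).2 fun i hi ↦ ?_
  have hzero₁ := AddCommGrpCat.isZero_of_iff_subsingleton.2 (hExt₁ i hi)
  have hzero₃ := AddCommGrpCat.isZero_of_iff_subsingleton.2 (hExt₃ i hi)
  exact AddCommGrpCat.subsingleton_of_isZero <| ShortComplex.Exact.isZero_of_both_zeros
    (Ext.covariant_sequence_exact₂' _ hS i) (hzero₁.eq_zero_of_src _) (hzero₃.eq_zero_of_tgt _)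

end HasRegularSequence

section CyclicModules

variable {𝔞 I : Ideal R} {r : ℕ} {x : R}

lemma smul_top_quotient_lt_top (h𝔞 : 𝔞 ≠ ⊤) (hI : I ≤ 𝔞) :
    𝔞 • (⊤ : Submodule R (R ⧸ I)) < ⊤ := by
  rw [lt_top_iff_ne_top, Ideal.smul_top_eq_map, Ne, Submodule.restrictScalars_eq_top_iff]
  intro htop
  apply h𝔞
  have := congrArg (Ideal.comap (algebraMap R (R ⧸ I))) htop
  rwa [Ideal.Quotient.algebraMap_eq, Ideal.comap_map_mk hI, Ideal.comap_top] at this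

lemma isSMulRegular_quotient_iff_colon_singleton_le :
    IsSMulRegular (R ⧸ I) x ↔ I.colon {x} ≤ I := by
  simp only [isSMulRegular_quotient_iff_mem_of_smul_mem, SetLike.le_def,
    Submodule.mem_colon_singleton, smul_eq_mul, mul_comm x]

lemma bot_colon_singleton_quotient_mk :
    (⊥ : Submodule R (R ⧸ I)).colon {Submodule.Quotient.mk x} = I.colon {x} := by
  ext f
  rw [Submodule.mem_colon_singleton, Submodule.mem_colon_singleton, Submodule.mem_bot,
    ← Submodule.Quotient.mk_smul, Submodule.Quotient.mk_eq_zero]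

variable (I x)

lemma smul_top_quotient_eq_map_mkQ_span :
    x • (⊤ : Submodule R (R ⧸ I)) = Submodule.map (Submodule.mkQ I) (Ideal.span {x}) := by
  rw [← Submodule.ideal_span_singleton_smul, ← I.range_mkQ, ← Submodule.map_top,
    ← Submodule.map_smul'', smul_eq_mul, Ideal.mul_top]

/-- The identification of `(R ⧸ I) ⧸ x (R ⧸ I)` with `R ⧸ (I + (x))`. -/
noncomputable def quotSMulTopQuotientEquiv :
    QuotSMulTop x (R ⧸ I) ≃ₗ[R] R ⧸ (I ⊔ Ideal.span {x}) :=
  (Submodule.quotEquivOfEq _ _ (smul_top_quotient_eq_map_mkQ_span I x)).trans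
    (Submodule.quotientQuotientEquivQuotientSup I (Ideal.span {x}))

lemma colon_singleton_eq_comap_mulRight :
    I.colon {x} = Submodule.comap (LinearMap.mulRight R x) I := by
  ext f
  exact Submodule.mem_colon_singleton

/-- Multiplication by `x` from `R ⧸ (I : x)` to `R ⧸ I`. -/
def quotientColonMul : (R ⧸ I.colon {x}) →ₗ[R] R ⧸ I :=
  Submodule.mapQ (I.colon {x}) I (LinearMap.mulRight R x) (colon_singleton_eq_comap_mulRight I x).le

lemma quotientColonMul_injective : Function.Injective (quotientColonMul I x) := by
  rw [← LinearMap.ker_eq_bot, quotientColonMul, Submodule.ker_mapQ,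
    ← colon_singleton_eq_comap_mulRight, Submodule.mkQ_map_self]

lemma exact_quotientColonMul_factor : Function.Exact (quotientColonMul I x)
    (Submodule.factor (le_sup_left : I ≤ I ⊔ Ideal.span {x})) := by
  have hrange : LinearMap.range (LinearMap.mulRight R x) = Ideal.span {x} := by
    ext f
    simp [Ideal.mem_span_singleton']
  rw [LinearMap.exact_iff, Submodule.factor, Submodule.ker_mapQ, quotientColonMul,
    Submodule.range_mapQ, hrange, Submodule.comap_id, Submodule.map_sup, Submodule.mkQ_map_self,
    bot_sup_eq]

variable {I x}

lemma HasRegularSequence.of_colon_of_sup [IsNoetherianRing R] (h𝔞 : 𝔞 ≠ ⊤)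
    (hcolon_le : I.colon {x} ≤ 𝔞) (hsup_le : I ⊔ Ideal.span {x} ≤ 𝔞)
    (hcolon : HasRegularSequence 𝔞 (R ⧸ I.colon {x}) r)
    (hsup : HasRegularSequence 𝔞 (R ⧸ (I ⊔ Ideal.span {x})) r) :
    HasRegularSequence 𝔞 (R ⧸ I) r :=
  of_exact (quotientColonMul_injective I x) (exact_quotientColonMul_factor I x)
    (Submodule.factor_surjective le_sup_left) (smul_top_quotient_lt_top h𝔞 hcolon_le)
    (smul_top_quotient_lt_top h𝔞 hsup_le) hcolon hsup

lemma HasRegularSequence.succ_of_colon_le (hx : x ∈ 𝔞) (hcolon : I.colon {x} ≤ I)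
    (hsup : HasRegularSequence 𝔞 (R ⧸ (I ⊔ Ideal.span {x})) r) :
    HasRegularSequence 𝔞 (R ⧸ I) (r + 1) :=
  succ hx (isSMulRegular_quotient_iff_colon_singleton_le.2 hcolon)
    ((congr (quotSMulTopQuotientEquiv I x)).2 hsup)

end CyclicModules

section UpperBound

variable {M : Type v} [AddCommGroup M] [Module R M] {p m : Ideal R} {x : R}

lemma notMem_of_isAssociatedPrime [IsNoetherianRing R] (hp : IsAssociatedPrime p M)
    (hx : IsSMulRegular M x) : x ∉ p := by
  intro hxp
  have : x ∈ ⋃ p ∈ associatedPrimes R M, (p : Set R) := Set.mem_biUnion hp hxp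
  rw [biUnion_associatedPrimes_eq_compl_regular] at this
  exact this hx

lemma quotSMulTop_map_subtype_injective {N : Submodule R M} (hx : IsSMulRegular (M ⧸ N) x) :
    Function.Injective (QuotSMulTop.map x N.subtype) := by
  have hexact : Function.Exact (0 : PUnit →ₗ[R] N) N.subtype :=
    LinearMap.exact_zero_iff_injective _ _ |>.2 N.subtype_injective
  have := QuotSMulTop.map_first_exact_on_four_term_exact_of_isSMulRegular_last hexact
    (LinearMap.exact_subtype_mkQ N) hx
  rwa [map_zero, LinearMap.exact_zero_iff_injective] at this

lemma isSMulRegular_quotient_torsionBySet {s : Set R} (hx : IsSMulRegular M x) :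
    IsSMulRegular (M ⧸ Submodule.torsionBySet R M s) x := by
  rw [isSMulRegular_quotient_iff_mem_of_smul_mem]
  intro y hy
  rw [Submodule.mem_torsionBySet_iff] at hy ⊢
  intro a
  apply hx.right_eq_zero_of_smul
  rw [smul_comm, hy]

/-- The submodule `N` of elements killed by `p` satisfies `N ⧸ x N ⊆ M ⧸ x M`, and the minimal
primes of `N ⧸ x N` contain both `p` and `x`. -/
lemma exists_isAssociatedPrime_quotSMulTop [IsNoetherianRing R] [Module.Finite R M] [m.IsPrime]
    (hx : IsSMulRegular M x) (hp : IsAssociatedPrime p M) (hpm : p ≤ m) (hxm : x ∈ m) :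
    ∃ q, IsAssociatedPrime q (QuotSMulTop x M) ∧ p ≤ q ∧ x ∈ q ∧ q ≤ m := by
  let N := Submodule.torsionBySet R M p
  have hpN : p ≤ Module.annihilator R (QuotSMulTop x N) := fun a ha ↦
    (Submodule.mkQ _).annihilator_le_of_surjective (Submodule.mkQ_surjective _) <|
      Module.mem_annihilator.2 fun y ↦
        Submodule.torsionBySet_isTorsionBySet (p : Set R) (x := y) (a := ⟨a, ha⟩)
  have hmN : (⟨m, inferInstance⟩ : PrimeSpectrum R) ∈ Module.support R N := by
    obtain ⟨-, y, hy⟩ := Submodule.isAssociatedPrime_iff.1 hp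
    have hyN : y ∈ N := (Submodule.mem_torsionBySet_iff _ _).2 fun a ↦ by
      simpa [hy] using a.2
    refine Module.mem_support_iff_exists_annihilator.2 ⟨⟨y, hyN⟩, fun a ha ↦ hpm ?_⟩
    rw [Submodule.mem_annihilator_span_singleton] at ha
    simpa [hy] using congrArg Subtype.val ha
  have hm : Module.annihilator R (QuotSMulTop x N) ≤ m := by
    rw [← Module.mem_support_iff_of_finite (p := ⟨m, inferInstance⟩), Module.support_quotSMulTop]
    exact ⟨hmN, by simpa⟩
  obtain ⟨q, hq, hqm⟩ := Ideal.exists_minimalPrimes_le hm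
  have hqN : IsAssociatedPrime q (QuotSMulTop x N) :=
    Module.associatedPrimes.minimalPrimes_annihilator_subset_associatedPrimes R _ hq
  exact ⟨q, hqN.map_of_injective _
    (quotSMulTop_map_subtype_injective (isSMulRegular_quotient_torsionBySet hx)),
    hpN.trans hq.1.2, hq.1.2 (QuotSMulTop.mem_annihilator N x), hqm⟩

/-- Each element of the sequence forces a strict step in a chain of primes above `p`. -/
lemma length_le_ringKrullDim_quotient [IsNoetherianRing R] [Module.Finite R M] [m.IsPrime]
    {l : List R} (hl : IsWeaklyRegular M l) (hlm : ∀ f ∈ l, f ∈ m) (hp : IsAssociatedPrime p M)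
    (hpm : p ≤ m) : (l.length : WithBot ℕ∞) ≤ ringKrullDim (R ⧸ p) := by
  induction l generalizing M p with
  | nil =>
    have := hp.isPrime
    simpa using ringKrullDim_nonneg_of_nontrivial
  | cons x l ih =>
    rw [isWeaklyRegular_cons_iff] at hl
    rw [List.forall_mem_cons] at hlm
    obtain ⟨q, hq, hpq, hxq, hqm⟩ := exists_isAssociatedPrime_quotSMulTop hl.1 hp hpm hlm.1
    have := hp.isPrime
    have hx : Ideal.Quotient.mk p x ∈ nonZeroDivisors (R ⧸ p) := by
      rw [mem_nonZeroDivisors_iff_ne_zero, Ne, Ideal.Quotient.eq_zero_iff_mem]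
      exact notMem_of_isAssociatedPrime hp hl.1
    calc ((x :: l).length : WithBot ℕ∞) = l.length + 1 := by simp
      _ ≤ ringKrullDim (R ⧸ q) + 1 := by gcongr; exact ih hl.2 hlm.2 hq hqm
      _ ≤ ringKrullDim (R ⧸ p) := ringKrullDim_succ_le_of_surjective (Ideal.Quotient.factor hpq)
          (Ideal.Quotient.factor_surjective hpq) hx (Ideal.Quotient.eq_zero_iff_mem.2 hxq)

end UpperBound

end Depth

section StanleyReisner

variable {K σ : Type*} [CommRing K]

lemma prod_X_eq_monomial (A : Finset σ) :
    ∏ i ∈ A, (X i : MvPolynomial σ K) = monomial (∑ i ∈ A, Finsupp.single i 1) 1 :=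
  (monomial_sum_one A _).symm

lemma sum_single_one_apply [DecidableEq σ] (A : Finset σ) (j : σ) :
    (∑ i ∈ A, Finsupp.single i 1 : σ →₀ ℕ) j = if j ∈ A then 1 else 0 := by
  simp [Finsupp.finsetSum_apply, Finsupp.single_apply]

lemma sum_single_one_le_iff {A : Finset σ} {d : σ →₀ ℕ} :
    ∑ i ∈ A, Finsupp.single i 1 ≤ d ↔ A ⊆ d.support := by
  classical
  simp only [Finsupp.le_def, sum_single_one_apply, Finset.subset_iff, Finsupp.mem_support_iff]
  refine forall_congr' fun j ↦ ?_
  split_ifs with hj <;> simp [hj, Nat.one_le_iff_ne_zero]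

lemma mem_span_prod_X_image {𝓕 : Set (Finset σ)} {f : MvPolynomial σ K} :
    f ∈ Ideal.span ((fun A ↦ ∏ i ∈ A, X i) '' 𝓕) ↔
      ∀ d ∈ f.support, ∃ A ∈ 𝓕, A ⊆ d.support := by
  have himage : (fun A ↦ ∏ i ∈ A, (X i : MvPolynomial σ K)) '' 𝓕 =
      (fun d ↦ monomial d 1) '' ((fun A ↦ ∑ i ∈ A, Finsupp.single i 1) '' 𝓕) := by
    simp only [Set.image_image, prod_X_eq_monomial]
  simp only [himage, mem_ideal_span_monomial_image, Set.exists_mem_image, sum_single_one_le_iff]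

variable (K) in
/-- The Stanley–Reisner ideal of the simplicial complex `Δ`, a complex being encoded as a lower set
of finite sets of vertices (so the complex without faces, of ideal `⊤`, is allowed). -/
noncomputable def stanleyReisnerIdeal (Δ : LowerSet (Finset σ)) : Ideal (MvPolynomial σ K) :=
  Ideal.span ((fun A ↦ ∏ i ∈ A, X i) '' (Δ : Set (Finset σ))ᶜ)

variable (K) in
/-- The Stanley–Reisner ring (face ring) of the simplicial complex `Δ`. -/
abbrev StanleyReisnerRing (Δ : LowerSet (Finset σ)) : Type _ :=
  MvPolynomial σ K ⧸ stanleyReisnerIdeal K Δ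

variable {Δ Γ : LowerSet (Finset σ)}

lemma mem_stanleyReisnerIdeal {f : MvPolynomial σ K} :
    f ∈ stanleyReisnerIdeal K Δ ↔ ∀ d ∈ f.support, d.support ∉ Δ := by
  rw [stanleyReisnerIdeal, mem_span_prod_X_image]
  refine forall₂_congr fun d _ ↦ ⟨?_, fun hd ↦ ⟨d.support, hd, subset_rfl⟩⟩
  rintro ⟨A, hA, hAd⟩ hd
  exact hA (Δ.lower hAd hd)

lemma stanleyReisnerIdeal_anti (h : Γ ≤ Δ) : stanleyReisnerIdeal K Δ ≤ stanleyReisnerIdeal K Γ :=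
  Ideal.span_mono <| Set.image_mono <| Set.compl_subset_compl.2 h

lemma stanleyReisnerIdeal_ne_top [Nontrivial K] (h : ∅ ∈ Δ) : stanleyReisnerIdeal K Δ ≠ ⊤ := by
  rw [Ideal.ne_top_iff_one, mem_stanleyReisnerIdeal]
  exact fun h₁ ↦ h₁ 0 (by simp) (by simpa)

lemma stanleyReisnerIdeal_Iic_empty :
    stanleyReisnerIdeal K (LowerSet.Iic (∅ : Finset σ)) = idealOfVars σ K := by
  ext f
  rw [idealOfVars, ← Set.image_univ, mem_ideal_span_X_image, mem_stanleyReisnerIdeal]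
  simp [Finsupp.ext_iff]

lemma stanleyReisnerIdeal_le_idealOfVars (h : ∅ ∈ Δ) :
    stanleyReisnerIdeal K Δ ≤ idealOfVars σ K := by
  rw [← stanleyReisnerIdeal_Iic_empty]
  exact stanleyReisnerIdeal_anti (LowerSet.Iic_le.2 h)

lemma idealOfVars_ne_top [Nontrivial K] : idealOfVars σ K ≠ ⊤ := by
  rw [← stanleyReisnerIdeal_Iic_empty]
  exact stanleyReisnerIdeal_ne_top (by simp)

lemma ker_killCompl_eq_stanleyReisnerIdeal (C : Finset σ) :
    RingHom.ker (killCompl (R := K) (Subtype.val_injective (p := (· ∈ C)))) =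
      stanleyReisnerIdeal K (LowerSet.Iic C) := by
  ext f
  simp only [RingHom.mem_ker, mem_stanleyReisnerIdeal, MvPolynomial.ext_iff, coeff_killCompl,
    coeff_zero, LowerSet.mem_Iic_iff]
  constructor
  · intro h d hd hdC
    have hrange : (d.support : Set σ) ⊆ Set.range (Subtype.val : {i // i ∈ C} → σ) := by
      simpa [Set.subset_def, Finset.subset_iff] using hdC
    rw [mem_support_iff, ← d.mapDomain_comapDomain _ Subtype.val_injective hrange] at hd
    exact hd (h _)
  · intro h d
    by_contra hd
    refine h _ (mem_support_iff.2 hd) fun i hi ↦ ?_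
    classical
    obtain ⟨j, -, rfl⟩ := Finset.mem_image.1 (Finsupp.mapDomain_support hi)
    exact j.2

lemma isPrime_stanleyReisnerIdeal_Iic [IsDomain K] (C : Finset σ) :
    (stanleyReisnerIdeal K (LowerSet.Iic C)).IsPrime := by
  rw [← ker_killCompl_eq_stanleyReisnerIdeal]
  exact RingHom.ker_isPrime _

lemma ringKrullDim_stanleyReisnerRing_Iic [IsNoetherianRing K] (C : Finset σ) :
    ringKrullDim (StanleyReisnerRing K (LowerSet.Iic C)) = ringKrullDim K + C.card := by
  have hsurj : Function.Surjective
      (killCompl (R := K) (Subtype.val_injective (p := (· ∈ C)))) :=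
    Function.LeftInverse.surjective (killCompl_rename_app _)
  let e := (Ideal.quotEquivOfEq (ker_killCompl_eq_stanleyReisnerIdeal (K := K) C).symm).trans
    (RingHom.quotientKerEquivOfSurjective hsurj)
  simp [ringKrullDim_eq_of_ringEquiv e]

lemma HasRegularSequence.zero_stanleyReisner [Nontrivial K] (h : ∅ ∈ Δ) :
    HasRegularSequence (idealOfVars σ K) (StanleyReisnerRing K Δ) 0 :=
  have := Ideal.Quotient.nontrivial_iff.2 (stanleyReisnerIdeal_ne_top (K := K) h)
  .zero _ _

/-- The deletion of the vertex `v` from `Δ`. -/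
def deletion (Δ : LowerSet (Finset σ)) (v : σ) : LowerSet (Finset σ) where
  carrier := {F | F ∈ Δ ∧ v ∉ F}
  lower' _ _ hFG hF := ⟨Δ.lower hFG hF.1, fun hv ↦ hF.2 (hFG hv)⟩

lemma stanleyReisnerIdeal_sup_span_X (Δ : LowerSet (Finset σ)) (v : σ) :
    stanleyReisnerIdeal K Δ ⊔ Ideal.span {X v} = stanleyReisnerIdeal K (deletion Δ v) := by
  have hX : ({X v} : Set (MvPolynomial σ K)) = (fun A ↦ ∏ i ∈ A, X i) '' {{v}} := by simp
  ext f
  rw [stanleyReisnerIdeal, hX, ← Ideal.span_union, ← Set.image_union, mem_span_prod_X_image,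
    mem_stanleyReisnerIdeal]
  refine forall₂_congr fun d _ ↦ ⟨?_, fun hd ↦ ?_⟩
  · rintro ⟨A, hA | rfl, hAd⟩ hd
    · exact hA (Δ.lower hAd hd.1)
    · exact hd.2 (hAd (Finset.mem_singleton_self v))
  · by_cases hv : v ∈ d.support
    · exact ⟨{v}, .inr rfl, Finset.singleton_subset_iff.2 hv⟩
    · exact ⟨d.support, .inl fun hΔ ↦ hd ⟨hΔ, hv⟩, subset_rfl⟩

section Star

variable [DecidableEq σ]

/-- The closed star of the face `A` in `Δ`; it has no faces if `A ∉ Δ`. -/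
def closedStar (Δ : LowerSet (Finset σ)) (A : Finset σ) : LowerSet (Finset σ) where
  carrier := {F | F ∪ A ∈ Δ}
  lower' _ _ hFG hF := Δ.lower (Finset.union_subset_union_left hFG) hF

lemma mem_closedStar {A F : Finset σ} : F ∈ closedStar Δ A ↔ F ∪ A ∈ Δ := Iff.rfl

lemma support_add_sum_single_one (d : σ →₀ ℕ) (A : Finset σ) :
    (d + ∑ i ∈ A, Finsupp.single i 1).support = d.support ∪ A := by
  ext j
  rw [Finsupp.mem_support_iff, Finsupp.add_apply, sum_single_one_apply, Finset.mem_union,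
    Finsupp.mem_support_iff]
  split_ifs with hj <;> simp [hj]

lemma stanleyReisnerIdeal_colon_prod_X (Δ : LowerSet (Finset σ)) (A : Finset σ) :
    (stanleyReisnerIdeal K Δ).colon {∏ i ∈ A, X i} = stanleyReisnerIdeal K (closedStar Δ A) := by
  ext f
  rw [Submodule.mem_colon_singleton, mem_stanleyReisnerIdeal, mem_stanleyReisnerIdeal, smul_eq_mul,
    prod_X_eq_monomial]
  simp only [mem_closedStar, ← support_add_sum_single_one]
  constructor
  · intro h d hd
    exact h _ (by simpa [mem_support_iff] using hd)
  · intro h d hd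
    rw [mem_support_iff, coeff_mul_monomial', ite_ne_right_iff, mul_one] at hd
    rw [← tsub_add_cancel_of_le hd.1]
    exact h _ (mem_support_iff.2 hd.2)

lemma deletion_le_Iic {v : σ} {W : Finset σ} (h : Δ ≤ LowerSet.Iic (insert v W)) :
    deletion Δ v ≤ LowerSet.Iic W :=
  fun _ hF ↦ (Finset.subset_insert_iff_of_notMem hF.2).1 (h hF.1)

lemma closedStar_le {A : Finset σ} : closedStar Δ A ≤ Δ :=
  fun _ hF ↦ Δ.lower Finset.subset_union_left hF

lemma closedStar_eq_Iic {C : Finset σ} (hC : Maximal (· ∈ Δ) C) :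
    closedStar Δ C = LowerSet.Iic C := by
  ext F
  refine ⟨fun hF ↦ Finset.union_eq_right.1 ?_, fun hF ↦ ?_⟩
  · exact hC.eq_of_ge hF Finset.subset_union_right
  · rw [SetLike.mem_coe, mem_closedStar, Finset.union_eq_right.2 hF]
    exact hC.1

lemma closedStar_closedStar (Δ : LowerSet (Finset σ)) (A : Finset σ) :
    closedStar (closedStar Δ A) A = closedStar Δ A := by
  ext F
  simp only [SetLike.mem_coe, mem_closedStar, Finset.union_assoc, Finset.union_self]

variable {r : ℕ} {v : σ}

/-- The star of `v` is a cone with apex `v` over the link of `v`, the deletion of `v` from it. -/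
lemma HasRegularSequence.succ_closedStar
    (h : HasRegularSequence (idealOfVars σ K)
      (StanleyReisnerRing K (deletion (closedStar Δ {v}) v)) r) :
    HasRegularSequence (idealOfVars σ K)
      (StanleyReisnerRing K (closedStar Δ {v})) (r + 1) := by
  refine succ_of_colon_le (x := X v) (Ideal.subset_span ⟨v, rfl⟩) ?_ ?_
  · rw [← Finset.prod_singleton X v, stanleyReisnerIdeal_colon_prod_X, closedStar_closedStar]
  · rwa [stanleyReisnerIdeal_sup_span_X]

lemma HasRegularSequence.of_closedStar_of_deletion [Nontrivial K] [IsNoetherianRing K] [Finite σ]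
    (hv : {v} ∈ Δ)
    (hstar : HasRegularSequence (idealOfVars σ K)
      (StanleyReisnerRing K (closedStar Δ {v})) r)
    (hdel : HasRegularSequence (idealOfVars σ K)
      (StanleyReisnerRing K (deletion Δ v)) r) :
    HasRegularSequence (idealOfVars σ K) (StanleyReisnerRing K Δ) r := by
  have hcolon := stanleyReisnerIdeal_colon_prod_X (K := K) Δ {v}
  rw [Finset.prod_singleton] at hcolon
  have hsup := stanleyReisnerIdeal_sup_span_X (K := K) Δ v
  refine of_colon_of_sup (x := X v) idealOfVars_ne_top ?_ ?_ (by rwa [hcolon]) (by rwa [hsup])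
  · rw [hcolon]
    exact stanleyReisnerIdeal_le_idealOfVars (by simpa [mem_closedStar])
  · rw [hsup]
    exact stanleyReisnerIdeal_le_idealOfVars ⟨Δ.lower (Finset.empty_subset _) hv, by simp⟩

end Star

lemma hasRegularSequence_stanleyReisnerRing [Nontrivial K] [IsNoetherianRing K] [Finite σ]
    {r : ℕ} {W : Finset σ} (hΔW : Δ ≤ LowerSet.Iic W) (hskel : ∀ A ⊆ W, A.card ≤ r → A ∈ Δ)
    (hr : r ≤ W.card) : HasRegularSequence (idealOfVars σ K) (StanleyReisnerRing K Δ) r := by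
  classical
  induction W using Finset.induction_on generalizing Δ r with
  | empty =>
    obtain rfl : r = 0 := by simpa using hr
    exact .zero_stanleyReisner (hskel ∅ subset_rfl (by simp))
  | insert v W hv ih =>
    obtain _ | s := r
    · exact .zero_stanleyReisner (hskel ∅ (by simp) (by simp))
    have hcard := Finset.card_insert_of_notMem hv
    have hstar : HasRegularSequence (idealOfVars σ K)
        (StanleyReisnerRing K (closedStar Δ {v})) (s + 1) := by
      refine .succ_closedStar (ih (deletion_le_Iic (closedStar_le.trans hΔW)) ?_ (by omega))
      exact fun A hA hAs ↦ ⟨hskel _ (by grind) (by grind), fun hvA ↦ hv (hA hvA)⟩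
    obtain hrW | hrW := hr.eq_or_lt
    · have hΔ : closedStar Δ {v} = Δ := closedStar_le.antisymm fun F hF ↦ by
        have hFW : F ∪ {v} ⊆ insert v W := Finset.union_subset (hΔW hF) (by simp)
        exact hskel _ hFW (hrW ▸ Finset.card_le_card hFW)
      rwa [hΔ] at hstar
    · refine .of_closedStar_of_deletion (hskel _ (by simp) (by simp)) hstar ?_
      refine ih (deletion_le_Iic hΔW) (fun A hA hAs ↦ ⟨?_, fun hvA ↦ hv (hA hvA)⟩) (by omega)
      exact hskel A (hA.trans (Finset.subset_insert _ _)) hAs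

lemma isAssociatedPrime_stanleyReisnerIdeal_Iic [IsDomain K] [IsNoetherianRing K] [Finite σ]
    {C : Finset σ} (hC : Maximal (· ∈ Δ) C) :
    IsAssociatedPrime (stanleyReisnerIdeal K (LowerSet.Iic C)) (StanleyReisnerRing K Δ) := by
  classical
  refine Submodule.isAssociatedPrime_iff.2 ⟨isPrime_stanleyReisnerIdeal_Iic C,
    Submodule.Quotient.mk (∏ i ∈ C, X i), ?_⟩
  rw [bot_colon_singleton_quotient_mk, stanleyReisnerIdeal_colon_prod_X, closedStar_eq_Iic hC]

lemma length_le_card_of_isWeaklyRegular {K : Type*} [Field K] [Finite σ] {C : Finset σ}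
    (hC : Maximal (· ∈ Δ) C)
    {l : List (MvPolynomial σ K)} (hl : IsWeaklyRegular (StanleyReisnerRing K Δ) l)
    (hlX : ∀ f ∈ l, f ∈ idealOfVars σ K) : l.length ≤ C.card := by
  have : (idealOfVars σ K).IsPrime := by
    rw [← stanleyReisnerIdeal_Iic_empty]
    exact isPrime_stanleyReisnerIdeal_Iic ∅
  have h := length_le_ringKrullDim_quotient hl hlX
    (isAssociatedPrime_stanleyReisnerIdeal_Iic hC) (stanleyReisnerIdeal_le_idealOfVars (by simp))
  rw [ringKrullDim_stanleyReisnerRing_Iic, ringKrullDim_eq_zero_of_field, zero_add] at h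
  exact_mod_cast h

theorem qdepth_stanleyReisnerIdeal {K : Type*} [Field K] [Finite σ] {C : Finset σ}
    (hC : Maximal (· ∈ Δ) C) (hskel : ∀ A : Finset σ, A.card ≤ C.card → A ∈ Δ) :
    qdepth K (stanleyReisnerIdeal K Δ) = C.card := by
  have := Fintype.ofFinite σ
  refine IsGreatest.csSup_eq ⟨?_, ?_⟩
  · exact hasRegularSequence_stanleyReisnerRing (W := Finset.univ) (fun A _ ↦ A.subset_univ)
      (fun A _ ↦ hskel A) (Finset.card_le_univ C)
  · rintro _ ⟨l, rfl, hlX, hl⟩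
    exact length_le_card_of_isWeaklyRegular hC hl.toIsWeaklyRegular hlX

end StanleyReisner

section Matchings

variable {σ : Type*} [Fintype σ] [DecidableEq σ] {G : SimpleGraph σ} {M : Finset (Sym2 σ)}
  {C : Finset σ} {a b : σ} {k : ℕ}

lemma mVerts_eq_biUnion (M : Finset (Sym2 σ)) : mVerts M = M.biUnion Sym2.toFinset := by
  ext v
  simp [mVerts]

lemma mVerts_insert : mVerts (insert s(a, b) M) = insert a (insert b (mVerts M)) := by
  ext v
  simp [mVerts_eq_biUnion, or_assoc]

lemma IsMatching.card_mVerts (hM : IsMatching G M) : (mVerts M).card = 2 * M.card := by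
  have hdisj : (M : Set (Sym2 σ)).PairwiseDisjoint Sym2.toFinset := fun e he f hf hef ↦
    Finset.disjoint_left.2 fun v hve hvf ↦
      hM.2 he hf hef v (Sym2.mem_toFinset.1 hve) (Sym2.mem_toFinset.1 hvf)
  have hedge (e) (he : e ∈ M) : e.toFinset.card = 2 :=
    Sym2.card_toFinset_of_not_isDiag e (G.not_isDiag_of_mem_edgeSet (hM.1 he))
  rw [mVerts_eq_biUnion, Finset.card_biUnion hdisj, Finset.sum_const_nat hedge, mul_comm]

lemma IsKMatching.insert (hM : IsKMatching G M k) (hab : G.Adj a b) (ha : a ∉ mVerts M)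
    (hb : b ∉ mVerts M) : IsKMatching G (insert s(a, b) M) (k + 1) := by
  have hdisj (f) (hf : f ∈ M) (v) (hv : v ∈ s(a, b)) : v ∉ f := by
    intro hvf
    have hvM : v ∈ mVerts M := by simpa [mVerts] using ⟨f, hf, hvf⟩
    obtain rfl | rfl := Sym2.mem_iff.1 hv
    exacts [ha hvM, hb hvM]
  have hnotMem : s(a, b) ∉ M := fun h ↦ hdisj _ h a (Sym2.mem_mk_left a b) (Sym2.mem_mk_left a b)
  refine ⟨⟨?_, ?_⟩, by rw [Finset.card_insert_of_notMem hnotMem, hM.2]⟩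
  · rw [Finset.coe_insert]
    exact Set.insert_subset hab hM.1.1
  · rw [Finset.coe_insert, Set.pairwise_insert]
    exact ⟨hM.1.2, fun f hf _ ↦ ⟨hdisj f hf, fun v hvf hv ↦ hdisj f hf v hv hvf⟩⟩

lemma exists_isKMatching_of_isClique (hC : G.IsClique C) (hcard : C.card = 2 * k) :
    ∃ M, IsKMatching G M k ∧ mVerts M ⊆ C := by
  induction k generalizing C with
  | zero => exact ⟨∅, ⟨⟨by simp, by simp⟩, rfl⟩, by simp [mVerts]⟩
  | succ k ih =>
    obtain ⟨a, ha, b, hb, hab⟩ := Finset.one_lt_card.1 (by omega : 1 < C.card)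
    have hb' : b ∈ C.erase a := Finset.mem_erase.2 ⟨hab.symm, hb⟩
    have hsub : (C.erase a).erase b ⊆ C := (Finset.erase_subset _ _).trans (Finset.erase_subset _ _)
    obtain ⟨M, hM, hMC⟩ := ih (C := (C.erase a).erase b) (hC.subset (by exact_mod_cast hsub))
      (by rw [Finset.card_erase_of_mem hb', Finset.card_erase_of_mem ha]; omega)
    refine ⟨_, hM.insert (hC ha hb hab) (fun h ↦ ?_) (fun h ↦ ?_), ?_⟩
    · exact Finset.notMem_erase a C (Finset.mem_of_mem_erase (hMC h))
    · exact Finset.notMem_erase b _ (hMC h)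
    · rw [mVerts_insert]
      exact Finset.insert_subset ha (Finset.insert_subset hb (hMC.trans hsub))

/-- The simplicial complex of the vertex sets that do not contain the vertices of any `k`-matching
of `G`. -/
def matchingFreeComplex (G : SimpleGraph σ) (k : ℕ) : LowerSet (Finset σ) where
  carrier := {F | ∀ M, IsKMatching G M k → ¬mVerts M ⊆ F}
  lower' _ _ hFG hF M hM hMF := hF M hM (hMF.trans hFG)

lemma mem_matchingFreeComplex {F : Finset σ} :
    F ∈ matchingFreeComplex G k ↔ ∀ M, IsKMatching G M k → ¬mVerts M ⊆ F := Iff.rfl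

lemma matchPow_eq_stanleyReisnerIdeal (K : Type*) [Field K] (G : SimpleGraph σ) (k : ℕ) :
    matchPow K G k = stanleyReisnerIdeal K (matchingFreeComplex G k) := by
  have hgens : {u | ∃ M, IsKMatching G M k ∧ u = matchMon K M} =
      (fun A ↦ ∏ i ∈ A, X i) '' (mVerts '' {M | IsKMatching G M k}) := by
    ext u
    simp [matchMon, eq_comm]
  ext f
  rw [matchPow, hgens, mem_span_prod_X_image, mem_stanleyReisnerIdeal]
  simp [mem_matchingFreeComplex]

lemma mem_matchingFreeComplex_of_card_lt {A : Finset σ} (hA : A.card < 2 * k) :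
    A ∈ matchingFreeComplex G k := by
  rintro M ⟨hM, rfl⟩ hMA
  exact hA.not_ge (hM.card_mVerts ▸ Finset.card_le_card hMA)

lemma exists_isKMatching_insert (hC : G.IsClique C) (hcard : C.card + 1 = 2 * k) (ha : a ∉ C)
    (hb : b ∈ C) (hab : G.Adj a b) : ∃ M, IsKMatching G M k ∧ mVerts M ⊆ insert a C := by
  obtain ⟨j, rfl⟩ : ∃ j, k = j + 1 := ⟨k - 1, by omega⟩
  obtain ⟨M, hM, hMC⟩ := exists_isKMatching_of_isClique (C := C.erase b) (k := j)
    (hC.subset (by simp)) (by rw [Finset.card_erase_of_mem hb]; omega)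
  refine ⟨_, hM.insert hab (fun h ↦ ha (Finset.mem_of_mem_erase (hMC h)))
    (fun h ↦ Finset.notMem_erase b C (hMC h)), ?_⟩
  rw [mVerts_insert, ← Finset.insert_erase hb]
  gcongr

lemma maximal_mem_matchingFreeComplex (hC : G.IsClique C) (hcard : C.card + 1 = 2 * k)
    (hdom : ∀ v ∉ C, ∃ u ∈ C, G.Adj v u) : Maximal (· ∈ matchingFreeComplex G k) C := by
  refine ⟨mem_matchingFreeComplex_of_card_lt (by omega), fun F hF hCF ↦ ?_⟩
  by_contra hFC
  obtain ⟨v, hvF, hvC⟩ := Finset.not_subset.1 hFC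
  obtain ⟨u, hu, hvu⟩ := hdom v hvC
  obtain ⟨M, hM, hMC⟩ := exists_isKMatching_insert hC hcard hvC hu hvu
  exact hF M hM (hMC.trans (Finset.insert_subset hvF hCF))

theorem min_depth_of_dominating_clique_general {K : Type*} [Field K] (hk : 1 ≤ k)
    (hcard : C.card = 2 * k - 1) (hC : G.IsClique C) (hdom : ∀ v ∉ C, ∃ u ∈ C, G.Adj v u) :
    qdepth K (matchPow K G k) = 2 * k - 1 := by
  have hcard_succ : C.card + 1 = 2 * k := by
    rw [hcard, Nat.sub_add_cancel (Nat.mul_pos two_pos hk)]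
  rw [matchPow_eq_stanleyReisnerIdeal, ← hcard]
  exact qdepth_stanleyReisnerIdeal (maximal_mem_matchingFreeComplex hC hcard_succ hdom)
    fun A hA ↦ mem_matchingFreeComplex_of_card_lt (by omega)

end Matchings

/-- Let `G` be a graph on `[n]` and `2 ≤ k ≤ ν(G)`. If `G` has
a dominating clique `K_{2k−1}`, then `g_{I(G)}(k) = 0`, i.e.
`depth(S/I(G)^{[k]}) = 2k − 1`. -/
theorem min_depth_of_dominating_clique {K : Type*} [Field K] {n : ℕ}
    (G : SimpleGraph (Fin n)) (k : ℕ) (hk2 : 2 ≤ k) (hk : k ≤ matchNum G)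
    (C : Finset (Fin n)) (hcard : C.card = 2 * k - 1)
    (hclique : ∀ x ∈ C, ∀ y ∈ C, x ≠ y → G.Adj x y)
    (hdom : ∀ v : Fin n, v ∉ C → ∃ u ∈ C, G.Adj v u) :
    qdepth K (matchPow K G k) = 2 * k - 1 := by
  exact min_depth_of_dominating_clique_general (by omega) hcard
    (fun x hx y hy ↦ hclique x hx y hy) hdom
end

section
/- Let I ⊂ S = K[x_1,…,x_n] be a monomial ideal with linear quotients. Then the squarefree part of I (the ideal generated by the squarefree minimal generators of I) also has linear quotients. -/
open MvPolynomial

/-!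
Write `x^d` for the monomial with exponent vector `d`. The colon ideal `(x^v : v ∈ E) : x^u` is
generated by variables iff for every `v ∈ E` there is a variable `x_k` in it with `u k < v k`, that
is, some `x^w` with `w ∈ E` divides `x_k * x^u`. As `u k < v k`, the monomial `x_k * x^u` divides
`lcm(x^u, x^v)`, so `w` lies in every order ideal of exponent vectors that contains `u` and `v`.
Hence linear quotients survive restricting the ordered generators to an order ideal, and the
exponent vectors of squarefree monomials form one.
-/

section ExponentVectors

open Finsupp

variable {σ : Type*}

/-- The condition on exponent vectors under which `(x^v : v ∈ E) : x^u` is generated by variables: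
for each `v ∈ E`, a variable dividing `x^v / gcd(x^v, x^u)` lies in that colon ideal. -/
def HasLinearColon (E : Set (σ →₀ ℕ)) (u : σ →₀ ℕ) : Prop :=
  ∀ v ∈ E, ∃ k, u k < v k ∧ ∃ w ∈ E, w ≤ single k 1 + u

/-- The linear quotients condition on an ordered list of exponent vectors: each entry has a linear
colon with respect to the entries before it (vacuously for the first one). -/
def HasSuccessiveLinearColons (L : List (σ →₀ ℕ)) : Prop :=
  ∀ l u, l ++ [u] <+: L → HasLinearColon {v | v ∈ l} u

theorem single_one_add_le_sup {u v : σ →₀ ℕ} {k : σ} (h : u k < v k) :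
    single k 1 + u ≤ u ⊔ v := by
  intro j
  rcases eq_or_ne k j with rfl | hkj
  · simp only [Finsupp.add_apply, single_eq_same, sup_apply]
    omega
  · simp [hkj.symm]

theorem HasLinearColon.inter {E : Set (σ →₀ ℕ)} {u : σ →₀ ℕ} (h : HasLinearColon E u)
    {J : Order.Ideal (σ →₀ ℕ)} (hu : u ∈ J) : HasLinearColon (E ∩ J) u := by
  rintro v ⟨hvE, hvJ⟩
  obtain ⟨k, hk, w, hwE, hwu⟩ := h v hvE
  have hwJ : w ∈ J := J.lower (hwu.trans (single_one_add_le_sup hk)) (Order.Ideal.sup_mem hu hvJ)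
  exact ⟨k, hk, w, ⟨hwE, hwJ⟩, hwu⟩

theorem HasSuccessiveLinearColons.filter {L : List (σ →₀ ℕ)} (h : HasSuccessiveLinearColons L)
    (J : Order.Ideal (σ →₀ ℕ)) [DecidablePred (· ∈ J)] :
    HasSuccessiveLinearColons (L.filter (· ∈ J)) := by
  induction L using List.reverseRecOn with
  | nil => exact h
  | append_singleton L a ih =>
    have ihL := ih fun l u hl => h l u (hl.trans (List.prefix_append L [a]))
    by_cases ha : a ∈ J
    · intro l u hl
      rw [List.filter_append, List.filter_singleton, decide_eq_true ha, cond_true,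
        List.prefix_concat_iff] at hl
      rcases hl with heq | hl
      · obtain ⟨rfl, rfl⟩ := List.append_singleton_inj.1 heq
        have hset : {v | v ∈ L.filter (· ∈ J)} = {v | v ∈ L} ∩ J := by ext v; simp
        exact hset ▸ (h L u List.prefix_rfl).inter ha
      · exact ihL l u hl
    · simpa [ha] using ihL

theorem hasSuccessiveLinearColons_iff_take {L : List (σ →₀ ℕ)} :
    HasSuccessiveLinearColons L ↔
      ∀ i (hi : i < L.length), 0 < i → HasLinearColon {v | v ∈ L.take i} L[i] := by
  constructor
  · intro h i hi _
    refine h _ _ ?_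
    rw [List.take_concat_get' L i hi]
    exact List.take_prefix _ _
  · rintro h l u ⟨r, rfl⟩ v hv
    simpa using h l.length (by simp) (List.length_pos_of_mem hv) v (by simpa using hv)

/-- The exponent vectors of squarefree monomials, as an order ideal: the lcm and the divisors of
squarefree monomials are squarefree. -/
def squarefreeExponents (σ : Type*) : Order.Ideal (σ →₀ ℕ) where
  carrier := {d | ∀ k, d k ≤ 1}
  lower' _ _ hle hd k := (hle k).trans (hd k)
  nonempty' := ⟨0, fun _ => zero_le_one⟩
  directed' d hd e he := ⟨d ⊔ e, fun k => sup_le (hd k) (he k), le_sup_left, le_sup_right⟩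

end ExponentVectors

section Monomials

variable {σ R : Type*}

theorem squarefree_monomial_one_iff [CommRing R] [IsDomain R] {d : σ →₀ ℕ} :
    Squarefree (monomial d (1 : R)) ↔ d ∈ squarefreeExponents σ := by
  constructor
  · intro hd k
    by_contra! hk
    have hdvd : (X k * X k : MvPolynomial σ R) ∣ monomial d 1 := by
      rw [X, monomial_mul, mul_one, monomial_one_dvd_monomial_one, ← Finsupp.single_add,
        Finsupp.single_le_iff]
      exact hk
    exact X_prime.not_isUnit (hd _ hdvd)
  · intro hd p hp
    obtain ⟨e, c, -, hc, rfl⟩ := dvd_monomial_one_iff_exists.1 (dvd_of_mul_left_dvd hp)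
    rw [monomial_mul, monomial_dvd_monomial] at hp
    have hee : e + e ≤ d := hp.1.resolve_left one_ne_zero
    have he : e = 0 := by
      ext k
      have hk : e k + e k ≤ 1 := (hee k).trans (hd k)
      rw [Finsupp.zero_apply]
      omega
    exact he ▸ hc.map C

variable [CommSemiring R] {E : Set (σ →₀ ℕ)} {u : σ →₀ ℕ}

theorem mem_colon_span_monomial_iff {f : MvPolynomial σ R} :
    f ∈ (Ideal.span ((fun d => monomial d (1 : R)) '' E)).colon (Ideal.span {monomial u (1 : R)}) ↔
      ∀ m ∈ f.support, ∃ v ∈ E, v ≤ m + u := by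
  rw [Ideal.mem_colon_span_singleton, mem_ideal_span_monomial_image]
  constructor
  · intro h m hm
    refine h (m + u) ?_
    rwa [mem_support_iff, coeff_mul_monomial, mul_one, ← mem_support_iff]
  · intro h m hm
    rw [mem_support_iff, coeff_mul_monomial', mul_one, ite_ne_right_iff] at hm
    obtain ⟨v, hv, hle⟩ := h (m - u) (mem_support_iff.2 hm.2)
    exact ⟨v, hv, hle.trans_eq (tsub_add_cancel_of_le hm.1)⟩

theorem monomial_mem_colon_span_monomial_iff [Nontrivial R] {d : σ →₀ ℕ} :
    monomial d (1 : R) ∈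
        (Ideal.span ((fun d => monomial d (1 : R)) '' E)).colon (Ideal.span {monomial u (1 : R)}) ↔
      ∃ v ∈ E, v ≤ d + u := by
  classical
  simp only [mem_colon_span_monomial_iff, support_monomial, one_ne_zero, if_false,
    Finset.mem_singleton, forall_eq]

theorem exists_colon_eq_span_X_iff [Nontrivial R] :
    (∃ A : Set σ,
      (Ideal.span ((fun d => monomial d (1 : R)) '' E)).colon (Ideal.span {monomial u (1 : R)}) =
        Ideal.span (X '' A)) ↔ HasLinearColon E u := by
  constructor
  · rintro ⟨A, hA⟩ v hv
    have hquot : monomial (v - u) (1 : R) ∈ Ideal.span (X '' A) :=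
      hA ▸ monomial_mem_colon_span_monomial_iff.2 ⟨v, hv, le_tsub_add⟩
    obtain ⟨k, hkA, hk⟩ := mem_ideal_span_X_image.1 hquot (v - u) (by classical simp)
    have hX : (X k : MvPolynomial σ R) ∈ Ideal.span (X '' A) :=
      Ideal.subset_span (Set.mem_image_of_mem X hkA)
    exact ⟨k, tsub_pos_iff_lt.1 (Nat.pos_of_ne_zero hk),
      monomial_mem_colon_span_monomial_iff.1 (hA ▸ hX)⟩
  · intro h
    refine ⟨{k | ∃ w ∈ E, w ≤ Finsupp.single k 1 + u}, le_antisymm ?_ ?_⟩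
    · intro f hf
      refine mem_ideal_span_X_image.2 fun m hm => ?_
      obtain ⟨v, hv, hle⟩ := mem_colon_span_monomial_iff.1 hf m hm
      obtain ⟨k, hk, hw⟩ := h v hv
      have hkm : v k ≤ m k + u k := hle k
      exact ⟨k, hw, by omega⟩
    · rw [Ideal.span_le]
      rintro _ ⟨k, hk, rfl⟩
      exact monomial_mem_colon_span_monomial_iff.2 hk

end Monomials

section LinearQuotients

variable {K σ : Type*} [Field K] {I : Ideal (MvPolynomial σ K)}

theorem minGens_span_eq_of_subset_minGens {S : Set (MvPolynomial σ K)} (hS : S ⊆ minGens K I) :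
    minGens K (Ideal.span S) = S := by
  have hle : Ideal.span S ≤ I := Ideal.span_le.2 fun u hu => (hS hu).2.1
  refine Set.Subset.antisymm ?_ fun u hu => ⟨(hS hu).1, Ideal.subset_span hu,
    fun v hv hvS hvu => (hS hu).2.2 v hv (hle hvS) hvu⟩
  rintro _ ⟨⟨d, rfl⟩, hd, hmin⟩
  have himage : (fun e => monomial e (1 : K)) '' {e | monomial e (1 : K) ∈ S} = S :=
    Set.image_preimage_eq_of_subset fun u hu => (hS hu).1.imp fun _ => Eq.symm
  rw [← himage, mem_ideal_span_monomial_image] at hd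
  obtain ⟨e, heS, hed⟩ := hd d (by classical simp)
  exact hmin _ ⟨e, rfl⟩ (Ideal.subset_span heS) (monomial_one_dvd_monomial_one.2 hed) ▸ heS

theorem hasLinearQuotientsOrder_map_monomial_iff {L : List (σ →₀ ℕ)} :
    HasLinearQuotientsOrder K I (L.map fun d => monomial d 1) ↔
      L.Nodup ∧ minGens K I = (fun d => monomial d 1) '' {d | d ∈ L} ∧
        HasSuccessiveLinearColons L := by
  have hinj : Function.Injective fun d : σ →₀ ℕ => monomial d (1 : K) :=
    monomial_left_injective one_ne_zero
  have hset (l : List (σ →₀ ℕ)) : {u | u ∈ l.map fun d => monomial d (1 : K)} =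
      (fun d => monomial d (1 : K)) '' {d | d ∈ l} := by
    ext u; simp
  have hgens : (∀ u, u ∈ L.map (fun d => monomial d (1 : K)) ↔ u ∈ minGens K I) ↔
      minGens K I = (fun d => monomial d 1) '' {d | d ∈ L} := by
    rw [← hset, eq_comm, Set.ext_iff]
    rfl
  simp only [HasLinearQuotientsOrder, hgens, List.nodup_map_iff hinj,
    hasSuccessiveLinearColons_iff_take, Fin.forall_iff, List.length_map, List.get_eq_getElem,
    List.getElem_map, ← List.map_take, hset, exists_colon_eq_span_X_iff]

theorem hasLinearQuotients_iff :
    HasLinearQuotients K I ↔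
      ∃ L : List (σ →₀ ℕ), L.Nodup ∧
        minGens K I = (fun d => monomial d 1) '' {d | d ∈ L} ∧
        HasSuccessiveLinearColons L := by
  simp only [← hasLinearQuotientsOrder_map_monomial_iff]
  constructor
  · rintro ⟨L, hL⟩
    have hrange : L ∈ Set.range (List.map fun d : σ →₀ ℕ => monomial d (1 : K)) := by
      rw [Set.range_list_map]
      exact fun u hu => ((hL.2.1 u).1 hu).1.imp fun _ => Eq.symm
    obtain ⟨L, rfl⟩ := hrange
    exact ⟨L, hL⟩
  · rintro ⟨L, hL⟩
    exact ⟨_, hL⟩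

theorem HasLinearQuotients.span_minGens_inter (h : HasLinearQuotients K I)
    (J : Order.Ideal (σ →₀ ℕ)) :
    HasLinearQuotients K
      (Ideal.span (minGens K I ∩ (fun d => monomial d (1 : K)) '' (J : Set (σ →₀ ℕ)))) := by
  classical
  obtain ⟨L, hnodup, hgens, hcolon⟩ := hasLinearQuotients_iff.1 h
  refine hasLinearQuotients_iff.2 ⟨L.filter (· ∈ J), hnodup.filter _, ?_, hcolon.filter J⟩
  rw [minGens_span_eq_of_subset_minGens Set.inter_subset_left, hgens,
    ← Set.image_inter (monomial_left_injective one_ne_zero)]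
  congr 1
  ext d
  simp

theorem sqfPart_eq_span_minGens_inter :
    sqfPart K I = Ideal.span (minGens K I ∩
      (fun d => monomial d (1 : K)) '' (squarefreeExponents σ : Set (σ →₀ ℕ))) := by
  rw [sqfPart]
  congr 1
  ext u
  refine and_congr_right fun hu => ?_
  obtain ⟨d, rfl⟩ := hu.1
  rw [squarefree_monomial_one_iff, (monomial_left_injective one_ne_zero).mem_set_image,
    SetLike.mem_coe]

theorem sqfPart_hasLinearQuotients_general (h : HasLinearQuotients K I) :
    HasLinearQuotients K (sqfPart K I) := by
  rw [sqfPart_eq_span_minGens_inter]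
  exact h.span_minGens_inter (squarefreeExponents σ)

end LinearQuotients

/-- If a monomial ideal `I` has linear quotients, then the
squarefree part of `I` also has linear quotients. -/
theorem sqfPart_hasLinearQuotients {K : Type*} [Field K] {n : ℕ}
    (I : Ideal (MvPolynomial (Fin n) K))
    (hmon : IsMonomialIdeal K I) (hlq : HasLinearQuotients K I) :
    HasLinearQuotients K (sqfPart K I) :=
  sqfPart_hasLinearQuotients_general hlq
end
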